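/- Compactness lemma (Flandoli–Gatarek): let B₀ ⊂ B ⊂ B₁ be Banach spaces with B₀ compactly embedded in B, let p ∈ (1,∞) and α ∈ (0,1). Then the embedding L^p(0,T;B₀) ∩ W^{α,p}(0,T;B₁) ↪ L^p(0,T;B) is compact. Moreover, if α ∈ (0,1), p > 1 and αp > 1, and B₀ ⊂ B compactly, then W^{α,p}(0,T;B₀) ↪ C⁰([0,T];B) compactly. -/

import Mathlib

open MeasureTheory
open scoped ENNReal

noncomputable section

/-- The Sobolev-Slobodeckij integrand. -/
def fgK {E : Type*} [NormedAddCommGroup E] (p q : ℝ) (F : ℝ → E) (t s : ℝ) : ℝ≥0∞ :=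
  ‖F t - F s‖ₑ ^ p / ENNReal.ofReal (|t - s| ^ q)

lemma fgK_measurable {E : Type*} [NormedAddCommGroup E] (p q : ℝ) (F : ℝ → E)
    (hF : StronglyMeasurable F) : Measurable (fun z : ℝ × ℝ => fgK p q F z.1 z.2) := by
  unfold fgK
  have h1 : StronglyMeasurable (fun z : ℝ × ℝ => F z.1 - F z.2) :=
    (hF.comp_measurable measurable_fst).sub (hF.comp_measurable measurable_snd)
  have h2 : Measurable (fun z : ℝ × ℝ => |z.1 - z.2|) := by fun_prop
  exact (h1.enorm.pow_const p).div (h2.pow_const q).ennreal_ofReal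

lemma fgK_bound {E : Type*} [NormedAddCommGroup E] (p q : ℝ) (hp : 0 < p) (hq : 0 < q) (F : ℝ → E)
    (t s h : ℝ) (hts : |t - s| ≤ h) :
    ‖F t - F s‖ₑ ^ p ≤ ENNReal.ofReal (h ^ q) * fgK p q F t s := by
  unfold fgK
  rcases eq_or_ne t s with rfl | hne
  · simp [hp]
  · have h0 : 0 < |t - s| := abs_pos.2 (sub_ne_zero.2 hne)
    have h1 : 0 < |t - s| ^ q := Real.rpow_pos_of_pos h0 q
    calc ‖F t - F s‖ₑ ^ p
        = ENNReal.ofReal (|t - s| ^ q) * (‖F t - F s‖ₑ ^ p / ENNReal.ofReal (|t - s| ^ q)) := by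
          rw [ENNReal.mul_div_cancel]
          · simpa using h1
          · simp
      _ ≤ _ := by gcongr

lemma fg_exists_point (a b : ℝ) (hab : a < b) (Φ : ℝ → ℝ≥0∞) (hΦ : Measurable Φ) :
    ∃ τ ∈ Set.Ioc a b, ENNReal.ofReal (b - a) * Φ τ ≤ ∫⁻ t in Set.Ioc a b, Φ t := by
  have hv : volume (Set.Ioc a b) = ENNReal.ofReal (b - a) := Real.volume_Ioc
  have h0 : volume (Set.Ioc a b) ≠ 0 := by rw [hv]; simpa using hab
  have h1 : volume (Set.Ioc a b) ≠ ⊤ := by rw [hv]; simp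
  obtain ⟨x, hx, hle⟩ := exists_le_setLAverage h0 h1 (hΦ.aemeasurable (μ := volume.restrict _))
  refine ⟨x, hx, ?_⟩
  rw [setLAverage_eq] at hle
  rw [← hv]
  calc _ ≤ volume (Set.Ioc a b) * ((∫⁻ t in Set.Ioc a b, Φ t) / volume (Set.Ioc a b)) := by gcongr
    _ = _ := ENNReal.mul_div_cancel h0 h1

lemma fg_sum (h : ℝ) (hh : 0 ≤ h) (Φ : ℝ → ℝ≥0∞) (m : ℕ) :
    ∫⁻ t in Set.Ioc 0 (m * h), Φ t
      = ∑ k ∈ Finset.range m, ∫⁻ t in Set.Ioc (k * h) ((k + 1 : ℕ) * h), Φ t := by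
  induction m with
  | zero => simp
  | succ m ih =>
    rw [Finset.sum_range_succ, ← ih, ← lintegral_union measurableSet_Ioc,
      Set.Ioc_union_Ioc_eq_Ioc (by positivity)]
    · push_cast; nlinarith
    · exact Set.Ioc_disjoint_Ioc_of_le le_rfl

lemma fg_sample {E B₁ : Type*} [NormedAddCommGroup E] [NormedAddCommGroup B₁]
    (f : ℝ → E) (F : ℝ → B₁) (hf : StronglyMeasurable f) (hF : StronglyMeasurable F)
    (p q T : ℝ) (hp : 0 < p) (hq : 0 < q) (Mb : ℝ≥0∞)
    (h1 : ∫⁻ t in Set.Ioc 0 T, ‖f t‖ₑ ^ p ≤ Mb)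
    (h2 : ∫⁻ t in Set.Ioc 0 T, ∫⁻ s in Set.Ioc 0 T, fgK p q F t s ≤ Mb)
    (N : ℕ) (h : ℝ) (hh : 0 < h) (hT : N * h = T) :
    ∃ τ : ℕ → ℝ, (∀ k < N, ENNReal.ofReal h * ‖f (τ k)‖ₑ ^ p ≤ 2 * Mb) ∧
      ENNReal.ofReal h * ∫⁻ t in Set.Ioc 0 T, ‖F t - F (τ (⌈t / h⌉₊ - 1))‖ₑ ^ p
        ≤ ENNReal.ofReal (h ^ q) * (2 * Mb) := by
  set Ψ : ℝ → ℝ≥0∞ := fun t => (∫⁻ s in Set.Ioc 0 T, fgK p q F t s) + ‖f t‖ₑ ^ p with hΨ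
  have hm : Measurable (fun t => ∫⁻ s in Set.Ioc 0 T, fgK p q F t s) :=
    (fgK_measurable p q F hF).lintegral_prod_right'
  have hΨm : Measurable Ψ := hm.add (hf.enorm.pow_const p)
  have hΨi : ∫⁻ t in Set.Ioc 0 T, Ψ t ≤ 2 * Mb := by
    rw [hΨ, lintegral_add_left hm, two_mul]
    gcongr
  have hk : ∀ k : ℕ, ∃ τ ∈ Set.Ioc (k * h) ((k + 1 : ℕ) * h),
      ENNReal.ofReal h * Ψ τ ≤ ∫⁻ t in Set.Ioc (k * h) ((k + 1 : ℕ) * h), Ψ t := by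
    intro k
    obtain ⟨τ, h1, h2⟩ := fg_exists_point (k * h) ((k + 1 : ℕ) * h) (by push_cast; nlinarith) Ψ hΨm
    refine ⟨τ, h1, ?_⟩
    convert h2 using 3
    push_cast; ring
  choose τ hτ hτΨ using hk
  have hsub : ∀ k < N, Set.Ioc (k * h) ((k + 1 : ℕ) * h) ⊆ Set.Ioc 0 T := by
    intro k hkN
    apply Set.Ioc_subset_Ioc (by positivity)
    rw [← hT]
    have : ((k + 1 : ℕ) : ℝ) ≤ N := by exact_mod_cast hkN
    gcongr
  refine ⟨τ, ?_, ?_⟩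
  · intro k hkN
    calc _ ≤ ENNReal.ofReal h * Ψ (τ k) := by gcongr; simp [hΨ]
      _ ≤ _ := hτΨ k
      _ ≤ ∫⁻ t in Set.Ioc 0 T, Ψ t := lintegral_mono_set (hsub k hkN)
      _ ≤ _ := hΨi
  · calc ENNReal.ofReal h * ∫⁻ t in Set.Ioc 0 T, ‖F t - F (τ (⌈t / h⌉₊ - 1))‖ₑ ^ p
        = ∑ k ∈ Finset.range N, ENNReal.ofReal h * ∫⁻ t in Set.Ioc (k * h) ((k + 1 : ℕ) * h),
            ‖F t - F (τ (⌈t / h⌉₊ - 1))‖ₑ ^ p := by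
          rw [← hT, fg_sum h hh.le, Finset.mul_sum]
      _ ≤ ∑ k ∈ Finset.range N, ENNReal.ofReal (h ^ q) *
            ∫⁻ t in Set.Ioc (k * h) ((k + 1 : ℕ) * h), Ψ t := by
          apply Finset.sum_le_sum
          intro k hkN
          have hkN := Finset.mem_range.1 hkN
          calc _ ≤ ENNReal.ofReal h * ∫⁻ s in Set.Ioc (k * h) ((k + 1 : ℕ) * h),
                  ENNReal.ofReal (h ^ q) * fgK p q F (τ k) s := by
                gcongr 1
                apply setLIntegral_mono_ae'  measurableSet_Ioc
                refine Filter.Eventually.of_forall fun s hs => ?_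
                have hc : ⌈s / h⌉₊ = k + 1 := by
                  rw [Nat.ceil_eq_iff (by simp)]
                  constructor
                  · simp only [Nat.add_sub_cancel]; rw [lt_div_iff₀ hh]; exact hs.1
                  · rw [div_le_iff₀ hh]; exact hs.2
                rw [hc, Nat.add_sub_cancel, ← enorm_neg, neg_sub]
                apply fgK_bound p q hp hq
                have h3 := hτ k
                have h4 := hs.1
                have h5 := hs.2
                have h6 := h3.1
                have h7 := h3.2
                push_cast at h4 h5 h6 h7
                rw [abs_le]; constructor <;> linarith
            _ = ENNReal.ofReal (h ^ q) * (ENNReal.ofReal h * ∫⁻ s in Set.Ioc (k * h) ((k + 1 : ℕ) * h),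
                  fgK p q F (τ k) s) := by
                rw [lintegral_const_mul' _ _ (by simp)]; ring
            _ ≤ ENNReal.ofReal (h ^ q) * (ENNReal.ofReal h * Ψ (τ k)) := by
                gcongr
                exact (lintegral_mono_set (hsub k hkN)).trans (by simp [hΨ])
            _ ≤ _ := by gcongr; exact hτΨ k
      _ = ENNReal.ofReal (h ^ q) * ∫⁻ t in Set.Ioc 0 T, Ψ t := by
          rw [← hT, fg_sum h hh.le Ψ, Finset.mul_sum]
      _ ≤ _ := by gcongr

lemma fg_ehrling {B₀ B B₁ : Type*}
    [NormedAddCommGroup B₀] [NormedSpace ℝ B₀]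
    [NormedAddCommGroup B] [NormedSpace ℝ B]
    [NormedAddCommGroup B₁] [NormedSpace ℝ B₁]
    (ι₀ : B₀ →L[ℝ] B) (hc : IsCompactOperator ι₀)
    (ι₁ : B →L[ℝ] B₁) (hι₁inj : Function.Injective ι₁) (η : ℝ) (hη : 0 < η) :
    ∃ C : ℝ, 0 ≤ C ∧ ∀ x, ‖ι₀ x‖ ≤ η * ‖x‖ + C * ‖ι₁ (ι₀ x)‖ := by
  by_contra! hcon
  have hx : ∀ n : ℕ, ∃ x : B₀, ‖x‖ ≤ 1 ∧ η + n * ‖ι₁ (ι₀ x)‖ ≤ ‖ι₀ x‖ := by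
    intro n
    obtain ⟨x, hx⟩ := hcon n (by positivity)
    have hx0 : x ≠ 0 := by rintro rfl; simp at hx
    have hn : 0 < ‖x‖ := norm_pos_iff.2 hx0
    refine ⟨‖x‖⁻¹ • x, ?_, ?_⟩
    · rw [norm_smul]; simp [hn.ne']
    · simp only [map_smul, norm_smul, norm_inv, norm_norm]
      have := mul_le_mul_of_nonneg_left hx.le (inv_nonneg.2 hn.le)
      calc _ = ‖x‖⁻¹ * (η * ‖x‖ + n * ‖ι₁ (ι₀ x)‖) := by field_simp
        _ ≤ _ := this
  choose x hx1 hx2 using hx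
  have hK : IsCompact (closure (ι₀ '' Metric.closedBall 0 1)) :=
    IsCompactOperator.isCompact_closure_image_closedBall (f := ι₀.toLinearMap) hc 1
  obtain ⟨y, -, φ, hφ, hy⟩ := hK.tendsto_subseq (x := fun n => ι₀ (x n))
    (fun n => subset_closure ⟨x n, by simpa using hx1 n, rfl⟩)
  have hyη : η ≤ ‖y‖ := by
    refine ge_of_tendsto' hy.norm fun n => ?_
    have := hx2 (φ n)
    have h2 : 0 ≤ (φ n : ℝ) * ‖ι₁ (ι₀ (x (φ n)))‖ := by positivity
    simp only [Function.comp]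
    linarith
  have h1 : Filter.Tendsto (fun n => ‖ι₁ (ι₀ (x (φ n)))‖) Filter.atTop (nhds ‖ι₁ y‖) :=
    ((ι₁.continuous.tendsto y).comp hy).norm
  have h2 : Filter.Tendsto (fun n => ‖ι₁ (ι₀ (x (φ n)))‖) Filter.atTop (nhds 0) := by
    have h3 : Filter.Tendsto (fun n => ‖ι₀‖ / (φ n : ℝ)) Filter.atTop (nhds 0) :=
      (tendsto_const_nhds.div_atTop (tendsto_natCast_atTop_atTop.comp hφ.tendsto_atTop))
    refine squeeze_zero' (Filter.Eventually.of_forall fun n => norm_nonneg _) ?_ h3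
    filter_upwards [Filter.eventually_gt_atTop 0] with n hn
    have : (0 : ℝ) < φ n := by exact_mod_cast hn.trans_le (hφ.id_le n)
    rw [le_div_iff₀ this]
    have h5 := hx2 (φ n)
    have h6 : ‖ι₀ (x (φ n))‖ ≤ ‖ι₀‖ * 1 := (ι₀.le_opNorm _).trans (by gcongr; exact hx1 _)
    linarith
  have h3 := tendsto_nhds_unique h1 h2
  have h4 : y = 0 := hι₁inj (by simpa using h3)
  rw [h4, norm_zero] at hyη
  linarith

lemma fg_small (A : ℝ≥0∞) (hA : A ≠ ⊤) (ε : ℝ≥0∞) (hε : 0 < ε) :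
    ∃ η : ℝ, 0 < η ∧ ENNReal.ofReal η * A < ε := by
  have h1 : Filter.Tendsto (fun η : ℝ => ENNReal.ofReal η * A) (nhdsWithin 0 (Set.Ioi 0)) (nhds 0) := by
    have h2 : Filter.Tendsto (fun η : ℝ => ENNReal.ofReal η) (nhdsWithin 0 (Set.Ioi 0)) (nhds 0) := by
      have := (ENNReal.continuous_ofReal.tendsto 0).mono_left
        (nhdsWithin_le_nhds (s := Set.Ioi (0 : ℝ)))
      simpa using this
    have h3 := ENNReal.Tendsto.mul_const (b := A) h2 (Or.inr hA)
    simpa using h3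
  obtain ⟨η, h2, h3⟩ := ((h1.eventually (gt_mem_nhds hε)).and self_mem_nhdsWithin).exists
  exact ⟨η, h3, h2⟩

lemma fg_eLpNorm_le {E : Type*} [NormedAddCommGroup E] {μ : Measure ℝ} (p : ℝ) (hp : 0 < p)
    (f : ℝ → E) (c : ℝ≥0∞) (h : ∫⁻ t, ‖f t‖ₑ ^ p ∂μ ≤ c) :
    eLpNorm f (ENNReal.ofReal p) μ ≤ c ^ (1 / p) := by
  rw [eLpNorm_eq_lintegral_rpow_enorm_toReal (by simpa using hp) (by simp),
    ENNReal.toReal_ofReal hp.le]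
  gcongr

lemma fg_pair {B₀ E B₁ : Type*}
    [NormedAddCommGroup B₀] [NormedSpace ℝ B₀]
    [NormedAddCommGroup E] [NormedSpace ℝ E]
    [NormedAddCommGroup B₁] [NormedSpace ℝ B₁]
    (L : B₀ →L[ℝ] E) (L₁ : B₀ →L[ℝ] B₁) (η C δ : ℝ) (hη : 0 ≤ η) (hC : 0 ≤ C)
    (hE : ∀ x, ‖L x‖ ≤ η * ‖x‖ + C * ‖L₁ x‖) (T p h : ℝ) (hp : 1 < p) (hh : 0 < h) (N : ℕ)
    (hT : N * h = T) (hN : 0 < N)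
    (f f' : ℝ → B₀) (hf : StronglyMeasurable f) (hf' : StronglyMeasurable f')
    (A D : ℝ≥0∞) (τ τ' : ℕ → ℝ)
    (h1 : eLpNorm f (ENNReal.ofReal p) (volume.restrict (Set.Ioc 0 T)) ≤ A)
    (h1' : eLpNorm f' (ENNReal.ofReal p) (volume.restrict (Set.Ioc 0 T)) ≤ A)
    (h2 : eLpNorm (fun t => L₁ (f t) - L₁ (f (τ (⌈t / h⌉₊ - 1)))) (ENNReal.ofReal p)
      (volume.restrict (Set.Ioc 0 T)) ≤ D)
    (h2' : eLpNorm (fun t => L₁ (f' t) - L₁ (f' (τ' (⌈t / h⌉₊ - 1)))) (ENNReal.ofReal p)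
      (volume.restrict (Set.Ioc 0 T)) ≤ D)
    (h3 : ∀ k < N, ‖L₁ (f (τ k)) - L₁ (f' (τ' k))‖ ≤ δ) :
    eLpNorm (fun t => L (f t) - L (f' t)) (ENNReal.ofReal p) (volume.restrict (Set.Ioc 0 T)) ≤
      ENNReal.ofReal η * (A + A) + (ENNReal.ofReal C * (D + D) +
        ENNReal.ofReal δ * (ENNReal.ofReal C * ENNReal.ofReal T ^ p⁻¹)) := by
  set μ := volume.restrict (Set.Ioc 0 T)
  have hP : 1 ≤ ENNReal.ofReal p := by simpa using hp.le
  have hstep : ∀ v : ℕ → B₁, StronglyMeasurable (fun t : ℝ => v (⌈t / h⌉₊ - 1)) := by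
    intro v
    have h4 : StronglyMeasurable (fun k : ℕ => v (k - 1)) := StronglyMeasurable.of_discrete
    exact h4.comp_measurable (g := fun t : ℝ => ⌈t / h⌉₊)
      (Nat.measurable_ceil.comp (measurable_id.div_const h))
  have hG := hstep (fun k => L₁ (f (τ k)))
  have hG' := hstep (fun k => L₁ (f' (τ' k)))
  have hF : StronglyMeasurable (fun t => L₁ (f t)) := L₁.continuous.comp_stronglyMeasurable hf
  have hF' : StronglyMeasurable (fun t => L₁ (f' t)) := L₁.continuous.comp_stronglyMeasurable hf'
  have e1 : eLpNorm (fun t => L₁ (f (τ (⌈t / h⌉₊ - 1))) - L₁ (f' (τ' (⌈t / h⌉₊ - 1))))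
      (ENNReal.ofReal p) μ ≤ ENNReal.ofReal T ^ p⁻¹ * ENNReal.ofReal δ := by
    have := eLpNorm_le_of_ae_bound (μ := μ) (p := ENNReal.ofReal p) (C := δ)
      (f := fun t => L₁ (f (τ (⌈t / h⌉₊ - 1))) - L₁ (f' (τ' (⌈t / h⌉₊ - 1)))) ?_
    · rw [ENNReal.toReal_ofReal (by linarith)] at this
      simpa [μ] using this
    · filter_upwards [ae_restrict_mem measurableSet_Ioc] with t ht
      apply h3
      have : ⌈t / h⌉₊ ≤ N := by
        rw [Nat.ceil_le, div_le_iff₀ hh, hT]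
        exact ht.2
      omega
  have e2 : eLpNorm (fun t => L₁ (f t) - L₁ (f' t)) (ENNReal.ofReal p) μ ≤
      D + D + ENNReal.ofReal T ^ p⁻¹ * ENNReal.ofReal δ := by
    have heq : (fun t => L₁ (f t) - L₁ (f' t)) =
      ((fun t => L₁ (f t) - L₁ (f (τ (⌈t / h⌉₊ - 1)))) -
        (fun t => L₁ (f' t) - L₁ (f' (τ' (⌈t / h⌉₊ - 1))))) +
        (fun t => L₁ (f (τ (⌈t / h⌉₊ - 1))) - L₁ (f' (τ' (⌈t / h⌉₊ - 1)))) := by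
      funext t; simp only [Pi.add_apply, Pi.sub_apply]; abel
    rw [heq]
    refine (eLpNorm_add_le ((hF.sub hG).sub (hF'.sub hG')).aestronglyMeasurable
      (hG.sub hG').aestronglyMeasurable hP).trans ?_
    refine add_le_add ?_ e1
    refine (eLpNorm_sub_le (hF.sub hG).aestronglyMeasurable
      (hF'.sub hG').aestronglyMeasurable hP).trans ?_
    exact add_le_add h2 h2'
  have e3 : eLpNorm (f - f') (ENNReal.ofReal p) μ ≤ A + A :=
    (eLpNorm_sub_le hf.aestronglyMeasurable hf'.aestronglyMeasurable hP).trans (by gcongr)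
  have e4 : eLpNorm (fun t => L (f t) - L (f' t)) (ENNReal.ofReal p) μ ≤
      eLpNorm (η • (fun t => ‖(f - f') t‖) + C • (fun t => ‖L₁ (f t) - L₁ (f' t)‖))
        (ENNReal.ofReal p) μ := by
    apply eLpNorm_mono_real
    intro t
    have := hE (f t - f' t)
    simpa using this
  refine e4.trans ((eLpNorm_add_le ?_ ?_ hP).trans ?_)
  · exact ((hf.sub hf').norm.const_smul η).aestronglyMeasurable
  · exact ((hF.sub hF').norm.const_smul C).aestronglyMeasurable
  · rw [eLpNorm_const_smul, eLpNorm_const_smul, eLpNorm_norm, eLpNorm_norm,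
      Real.enorm_of_nonneg hη, Real.enorm_of_nonneg hC]
    gcongr
    calc _ ≤ ENNReal.ofReal C * (D + D + ENNReal.ofReal T ^ p⁻¹ * ENNReal.ofReal δ) := by gcongr
      _ = _ := by ring

lemma fg_partA {B₀ E B₁ : Type*}
    [NormedAddCommGroup B₀] [NormedSpace ℝ B₀]
    [NormedAddCommGroup E] [NormedSpace ℝ E] [CompleteSpace E]
    [NormedAddCommGroup B₁] [NormedSpace ℝ B₁]
    (L : B₀ →L[ℝ] E) (L₁ : B₀ →L[ℝ] B₁) (hL₁ : IsCompactOperator L₁)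
    (hE : ∀ η : ℝ, 0 < η → ∃ C : ℝ, 0 ≤ C ∧ ∀ x, ‖L x‖ ≤ η * ‖x‖ + C * ‖L₁ x‖)
    (T p α : ℝ) (hT : 0 < T) (hp : 1 < p) (hα : 0 < α)
    (f : ℕ → ℝ → B₀) (Mb : ℝ≥0∞) (hM : Mb ≠ ⊤) (hf : ∀ n, StronglyMeasurable (f n))
    (h1 : ∀ n, ∫⁻ t in Set.Ioc 0 T, ‖f n t‖ₑ ^ p ≤ Mb)
    (h2 : ∀ n, ∫⁻ t in Set.Ioc 0 T, ∫⁻ s in Set.Ioc 0 T,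
      fgK p (1 + α * p) (fun t => L₁ (f n t)) t s ≤ Mb) :
    ∃ φ : ℕ → ℕ, StrictMono φ ∧ ∃ g : ℝ → E,
      Filter.Tendsto (fun n => ∫⁻ t in Set.Ioc 0 T, ‖L (f (φ n) t) - g t‖ₑ ^ p)
        Filter.atTop (nhds 0) ∧
      ∀ᵐ t ∂(volume.restrict (Set.Ioc 0 T)),
        Filter.Tendsto (fun n => L (f (φ n) t)) Filter.atTop (nhds (g t)) := by
  set μ := volume.restrict (Set.Ioc 0 T) with hμ
  have hp0 : 0 < p := by linarith
  have hP : 1 ≤ ENNReal.ofReal p := by simpa using hp.le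
  have : Fact (1 ≤ ENNReal.ofReal p) := ⟨hP⟩
  have hA : ∀ n, eLpNorm (f n) (ENNReal.ofReal p) μ ≤ Mb ^ (1 / p) := fun n =>
    fg_eLpNorm_le p hp0 _ _ (h1 n)
  have hAt : Mb ^ (1 / p) ≠ ⊤ := ENNReal.rpow_ne_top_of_nonneg (by positivity) hM
  have hmem : ∀ n, MemLp (fun t => L (f n t)) (ENNReal.ofReal p) μ := by
    intro n
    have : MemLp (f n) (ENNReal.ofReal p) μ :=
      ⟨(hf n).aestronglyMeasurable, (hA n).trans_lt hAt.lt_top⟩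
    exact L.comp_memLp' this
  set u : ℕ → Lp E (ENNReal.ofReal p) μ := fun n => (hmem n).toLp _ with hu
  have htb : TotallyBounded (Set.range u) := by
    apply Metric.totallyBounded_of_finite_discretization
    intro ε hε
    have hε3 : (0 : ℝ≥0∞) < ENNReal.ofReal (ε / 3) := by simpa using hε
    obtain ⟨η, hη, hηA⟩ := fg_small (Mb ^ (1 / p) + Mb ^ (1 / p)) (ENNReal.add_ne_top.2 ⟨hAt, hAt⟩) _ hε3
    obtain ⟨C, hC, hLC⟩ := hE η hη
    -- choice of N
    set D : ℕ → ℝ≥0∞ := fun N =>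
      (ENNReal.ofReal ((T / N) ^ (α * p)) * (2 * Mb)) ^ (1 / p) with hD
    have hDlim : Filter.Tendsto (fun N => ENNReal.ofReal C * (D N + D N)) Filter.atTop (nhds 0) := by
      have l1 : Filter.Tendsto (fun N : ℕ => T / (N : ℝ)) Filter.atTop (nhds 0) :=
        tendsto_const_nhds.div_atTop tendsto_natCast_atTop_atTop
      have l2 : Filter.Tendsto (fun N : ℕ => (T / (N : ℝ)) ^ (α * p)) Filter.atTop (nhds 0) := by
        have := l1.rpow_const (p := α * p) (Or.inr (by positivity))
        rwa [Real.zero_rpow (by positivity)] at this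
      have l3 := ENNReal.tendsto_ofReal l2
      have l4 := ENNReal.Tendsto.mul_const (b := 2 * Mb) l3
        (Or.inr (ENNReal.mul_ne_top (by simp) hM))
      have l5 : Filter.Tendsto D Filter.atTop (nhds 0) := by
        have := (ENNReal.continuous_rpow_const (y := 1 / p)).tendsto _ |>.comp l4
        simp only [zero_mul, ENNReal.ofReal_zero, ENNReal.zero_rpow_of_pos (one_div_pos.2 hp0)]
          at this
        exact this
      have l6 := ENNReal.Tendsto.const_mul (a := ENNReal.ofReal C) (l5.add l5)
        (Or.inr (by simp))
      simpa using l6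
    obtain ⟨N, hND, hN⟩ := ((hDlim.eventually (gt_mem_nhds hε3)).and
      (Filter.eventually_gt_atTop 0)).exists
    obtain ⟨δ, hδ, hδC⟩ := fg_small (ENNReal.ofReal C * ENNReal.ofReal T ^ p⁻¹)
      (ENNReal.mul_ne_top (by simp) (ENNReal.rpow_ne_top_of_nonneg (by positivity) (by simp)))
      _ hε3
    set h : ℝ := T / N with hh_def
    have hN' : (0 : ℝ) < N := by exact_mod_cast hN
    have hh : 0 < h := by positivity
    have hNh : N * h = T := by rw [hh_def]; field_simp
    have hs := fun n => fg_sample (f n) (fun t => L₁ (f n t)) (hf n)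
      (L₁.continuous.comp_stronglyMeasurable (hf n)) p (1 + α * p) T hp0 (by positivity) Mb
      (h1 n) (h2 n) N h hh hNh
    choose τ hτ1 hτ2 using hs
    have hτD : ∀ n, eLpNorm (fun t => L₁ (f n t) - L₁ (f n (τ n (⌈t / h⌉₊ - 1))))
        (ENNReal.ofReal p) μ ≤ D N := by
      intro n
      apply fg_eLpNorm_le p hp0
      have := hτ2 n
      rw [Real.rpow_add hh, Real.rpow_one, ENNReal.ofReal_mul hh.le, mul_assoc] at this
      exact (ENNReal.mul_le_mul_iff_right (by simpa using hh) (by simp)).1 this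
    -- the compact set
    set R : ℝ≥0∞ := (2 * Mb / ENNReal.ofReal h) ^ (1 / p) with hR
    have hRt : R ≠ ⊤ := by
      apply ENNReal.rpow_ne_top_of_nonneg (by positivity)
      exact ENNReal.div_ne_top (ENNReal.mul_ne_top (by simp) hM) (by simpa using hh)
    have hK : IsCompact (closure (L₁ '' Metric.closedBall 0 R.toReal)) :=
      IsCompactOperator.isCompact_closure_image_closedBall (f := L₁.toLinearMap) hL₁ _
    have hKmem : ∀ n, ∀ k < N, L₁ (f n (τ n k)) ∈ closure (L₁ '' Metric.closedBall 0 R.toReal) := by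
      intro n k hk
      apply subset_closure
      refine ⟨_, ?_, rfl⟩
      rw [mem_closedBall_zero_iff, ← toReal_enorm]
      apply ENNReal.toReal_mono hRt
      rw [hR, one_div, ENNReal.le_rpow_inv_iff hp0, ENNReal.le_div_iff_mul_le (by left; simpa using hh) (by simp), mul_comm]
      exact hτ1 n k hk
    obtain ⟨t, htf, hcov⟩ := Metric.totallyBounded_iff.1 hK.totallyBounded (δ / 2) (by positivity)
    have hcol : ∀ n, ∀ k : Fin N, ∃ y : t, dist (L₁ (f n (τ n k))) y < δ / 2 := by
      intro n k
      have := hcov (hKmem n k k.2)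
      simp only [Set.mem_iUnion, Metric.mem_ball] at this
      obtain ⟨y, hy, hd⟩ := this
      exact ⟨⟨y, hy⟩, hd⟩
    choose c hc using hcol
    let _ := htf.fintype
    classical
    refine ⟨ULift (Fin (Fintype.card (Fin N → t))), inferInstance,
      fun x => ⟨Fintype.equivFin _ (c x.2.choose)⟩, ?_⟩
    rintro ⟨x, hx⟩ ⟨y, hy⟩ hxy
    have hx' := hx.choose_spec
    have hy' := hy.choose_spec
    have hxy : c hx.choose = c hy.choose :=
      (Fintype.equivFin _).injective (ULift.up_injective hxy)
    simp only
    set n := hx.choose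
    set m := hy.choose
    rw [← hx', ← hy', Lp.dist_def]
    have key := fg_pair L L₁ η C δ hη.le hC hLC T p h hp hh N hNh hN (f n) (f m) (hf n) (hf m)
      _ _ (τ n) (τ m) (hA n) (hA m) (hτD n) (hτD m) (by
        intro k hk
        have e1 := hc n ⟨k, hk⟩
        have e2 := hc m ⟨k, hk⟩
        rw [← hxy] at e2
        rw [← dist_eq_norm]
        have := dist_triangle_right (L₁ (f n (τ n k))) (L₁ (f m (τ m k))) (c n ⟨k, hk⟩ : B₁)
        simp only at e1 e2
        linarith)
    have hlt : eLpNorm (fun t => L (f n t) - L (f m t)) (ENNReal.ofReal p) μ < ENNReal.ofReal ε := by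
      refine key.trans_lt ?_
      refine (ENNReal.add_lt_add hηA (ENNReal.add_lt_add hND hδC)).trans_le ?_
      rw [← ENNReal.ofReal_add (by positivity) (by positivity),
        ← ENNReal.ofReal_add (by positivity) (by positivity)]
      exact ENNReal.ofReal_le_ofReal (by linarith)
    have heq : eLpNorm (⇑(u n) - ⇑(u m)) (ENNReal.ofReal p) μ =
        eLpNorm (fun t => L (f n t) - L (f m t)) (ENNReal.ofReal p) μ := by
      apply eLpNorm_congr_ae
      exact (hmem n).coeFn_toLp.sub (hmem m).coeFn_toLp
    rw [heq]
    exact (ENNReal.lt_ofReal_iff_toReal_lt (ne_top_of_lt hlt)).1 hlt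
  have hcpt : IsCompact (closure (Set.range u)) :=
    htb.closure.isCompact_of_isClosed isClosed_closure
  obtain ⟨G, -, φ, hφ, hG⟩ := hcpt.tendsto_subseq (x := u) (fun n => subset_closure ⟨n, rfl⟩)
  obtain ⟨ψ, hψ, hae⟩ := (tendstoInMeasure_of_tendsto_Lp hG).exists_seq_tendsto_ae
  refine ⟨φ ∘ ψ, hφ.comp hψ, G, ?_, ?_⟩
  · have h3 := (Lp.tendsto_Lp_iff_tendsto_eLpNorm' _ _).1 (hG.comp hψ.tendsto_atTop)
    have h4 := (ENNReal.continuous_rpow_const (y := p)).tendsto _ |>.comp h3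
    rw [ENNReal.zero_rpow_of_pos hp0] at h4
    refine h4.congr fun n => ?_
    simp only [Function.comp]
    rw [eLpNorm_eq_lintegral_rpow_enorm_toReal (by simpa using hp0) (by simp),
      ENNReal.toReal_ofReal hp0.le, one_div, ENNReal.rpow_inv_rpow hp0.ne']
    apply lintegral_congr_ae
    filter_upwards [(hmem (φ (ψ n))).coeFn_toLp] with t ht
    simp [hu, ht]
  · have h5 : ∀ᵐ t ∂μ, ∀ n, u n t = L (f n t) := by
      rw [ae_all_iff]
      exact fun n => (hmem n).coeFn_toLp
    filter_upwards [hae, h5] with t ht h5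
    refine ht.congr fun n => ?_
    simp [h5]

lemma fg_partA' {B₀ B B₁ : Type*}
    [NormedAddCommGroup B₀] [NormedSpace ℝ B₀]
    [NormedAddCommGroup B] [NormedSpace ℝ B]
    [NormedAddCommGroup B₁] [NormedSpace ℝ B₁]
    (ι₀ : B₀ →L[ℝ] B) (hc : IsCompactOperator ι₀)
    (ι₁ : B →L[ℝ] B₁) (hι₁inj : Function.Injective ι₁)
    (T p α : ℝ) (hT : 0 < T) (hp : 1 < p) (hα : 0 < α)
    (f : ℕ → ℝ → B₀) (Mb : ℝ≥0∞) (hM : Mb ≠ ⊤) (hf : ∀ n, StronglyMeasurable (f n))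
    (h1 : ∀ n, ∫⁻ t in Set.Ioc 0 T, ‖f n t‖ₑ ^ p ≤ Mb)
    (h2 : ∀ n, ∫⁻ t in Set.Ioc 0 T, ∫⁻ s in Set.Ioc 0 T,
      fgK p (1 + α * p) (fun t => ι₁ (ι₀ (f n t))) t s ≤ Mb) :
    ∃ φ : ℕ → ℕ, StrictMono φ ∧ ∃ g : ℝ → B,
      AEStronglyMeasurable g (volume.restrict (Set.Ioc 0 T)) ∧
      Filter.Tendsto (fun n => ∫⁻ t in Set.Ioc 0 T, ‖ι₀ (f (φ n) t) - g t‖ₑ ^ p)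
        Filter.atTop (nhds 0) := by
  have hp0 : 0 < p := by linarith
  let j : B →L[ℝ] UniformSpace.Completion B := UniformSpace.Completion.toComplL
  have hj : ∀ y, j y = (y : UniformSpace.Completion B) := fun y => rfl
  obtain ⟨φ, hφ, G, hG, hae⟩ := fg_partA (j.comp ι₀) (ι₁.comp ι₀) (hc.clm_comp ι₁)
    (fun η hη => by
      obtain ⟨C, hC, h⟩ := fg_ehrling ι₀ hc ι₁ hι₁inj η hη
      refine ⟨C, hC, fun x => ?_⟩
      simpa [hj] using h x) T p α hT hp hα f Mb hM hf h1 h2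
  have hfat : ∀ᵐ t ∂(volume.restrict (Set.Ioc 0 T)),
      Filter.liminf (fun n => ‖f (φ n) t‖ₑ ^ p) Filter.atTop < ⊤ := by
    apply ae_lt_top
    · exact Measurable.liminf fun n => (hf _).enorm.pow_const p
    · refine ne_top_of_le_ne_top hM ((lintegral_liminf_le fun n => (hf _).enorm.pow_const p).trans ?_)
      refine Filter.liminf_le_of_le (by isBoundedDefault) ?_
      intro b hb
      obtain ⟨n, hn⟩ := hb.exists
      exact hn.trans (h1 _)
  have hex : ∀ᵐ t ∂(volume.restrict (Set.Ioc 0 T)), ∃ y : B, j y = G t := by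
    filter_upwards [hfat, hae] with t ht1 ht2
    obtain ⟨c, hc1, hc2⟩ := exists_between ht1
    have hfr := Filter.frequently_lt_of_liminf_lt (by isBoundedDefault) hc1
    have hK : IsCompact (closure (ι₀ '' Metric.closedBall 0 (c ^ (1 / p)).toReal)) :=
      IsCompactOperator.isCompact_closure_image_closedBall (f := ι₀.toLinearMap) hc _
    have hK' := hK.image j.continuous
    have hmem : G t ∈ j '' closure (ι₀ '' Metric.closedBall 0 (c ^ (1 / p)).toReal) := by
      refine hK'.isClosed.mem_of_frequently_of_tendsto ?_ ht2
      refine hfr.mono fun n hn => ?_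
      refine ⟨ι₀ (f (φ n) t), subset_closure ⟨_, ?_, rfl⟩, rfl⟩
      rw [mem_closedBall_zero_iff, ← toReal_enorm]
      apply ENNReal.toReal_mono (ENNReal.rpow_ne_top_of_nonneg (by positivity) hc2.ne)
      rw [one_div, ENNReal.le_rpow_inv_iff hp0]
      exact hn.le
    obtain ⟨y, -, hy⟩ := hmem
    exact ⟨y, hy⟩
  classical
  let g : ℝ → B := fun t => if h : ∃ y : B, j y = G t then h.choose else 0
  have hg : ∀ᵐ t ∂(volume.restrict (Set.Ioc 0 T)), j (g t) = G t := by
    filter_upwards [hex] with t ht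
    simp only [g, dif_pos ht]
    exact ht.choose_spec
  refine ⟨φ, hφ, g, ?_, ?_⟩
  · refine aestronglyMeasurable_of_tendsto_ae Filter.atTop (f := fun n t => ι₀ (f (φ n) t))
      (fun n => (ι₀.continuous.comp_stronglyMeasurable (hf _)).aestronglyMeasurable) ?_
    filter_upwards [hg, hae] with t ht1 ht2
    rw [(UniformSpace.Completion.isUniformInducing_coe B).isInducing.tendsto_nhds_iff]
    rw [← ht1] at ht2
    exact ht2
  · refine hG.congr fun n => ?_
    apply lintegral_congr_ae
    filter_upwards [hg] with t ht
    rw [← ht]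
    simp only [ContinuousLinearMap.comp_apply]
    rw [← map_sub, hj]
    congr 1
    rw [← ofReal_norm, ← ofReal_norm, UniformSpace.Completion.norm_coe]

lemma fg_seq (P : ℕ → ℝ → Prop) (R : ℕ → ℝ → ℝ → Prop) (t0 : ℝ) (h0 : P 0 t0)
    (hs : ∀ j t, P j t → ∃ t', P (j + 1) t' ∧ R j t t') :
    ∃ u : ℕ → ℝ, u 0 = t0 ∧ ∀ j, P j (u j) ∧ R j (u j) (u (j + 1)) := by
  choose! g hg1 hg2 using hs
  let u : ℕ → ℝ := fun n => Nat.rec t0 (fun j t => g j t) n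
  have hu : ∀ j, P j (u j) := by
    intro j
    induction j with
    | zero => exact h0
    | succ j ih => exact hg1 j _ ih
  exact ⟨u, rfl, fun j => ⟨hu j, hg2 j _ (hu j)⟩⟩

/-- One step of the chaining argument. -/
lemma fg_step {E : Type*} [NormedAddCommGroup E] (f : ℝ → E) (hf : StronglyMeasurable f)
    (p q T : ℝ) (Mb : ℝ≥0∞) (Ψ : ℝ → ℝ≥0∞) (hΨm : Measurable Ψ)
    (hΨ1 : ∀ t, ∫⁻ s in Set.Ioc 0 T, fgK p q f t s ≤ Ψ t)
    (hΨ : ∫⁻ t in Set.Ioc 0 T, Ψ t ≤ Mb) (a b ℓ : ℝ) (hab : b - a = ℓ / 2) (hℓ : 0 < ℓ)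
    (hsub : Set.Ioc a b ⊆ Set.Ioc 0 T) (t : ℝ) (ht : ENNReal.ofReal ℓ * Ψ t ≤ 2 * Mb) :
    ∃ t' ∈ Set.Ioc a b, ENNReal.ofReal (ℓ / 2) * Ψ t' ≤ 2 * Mb ∧
      ENNReal.ofReal (ℓ / 2) * (ENNReal.ofReal (ℓ / 2) * fgK p q f t t') ≤ 2 * Mb := by
  have hKm : Measurable (fun s => fgK p q f t s) :=
    (fgK_measurable p q f hf).comp (measurable_const.prodMk measurable_id)
  obtain ⟨t', ht', hle⟩ := fg_exists_point a b (by linarith)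
    (fun s => Ψ s + ENNReal.ofReal (ℓ / 2) * fgK p q f t s) (hΨm.add (hKm.const_mul _))
  have hbd : ENNReal.ofReal (ℓ / 2) * Ψ t ≤ Mb := by
    have e : ENNReal.ofReal ℓ = 2 * ENNReal.ofReal (ℓ / 2) := by
      rw [← ENNReal.ofReal_ofNat, ← ENNReal.ofReal_mul (by norm_num)]
      congr 1; ring
    rw [e, mul_assoc] at ht
    exact (ENNReal.mul_le_mul_iff_right (by simp) (by simp)).1 ht
  have htot : ∫⁻ s in Set.Ioc a b, (Ψ s + ENNReal.ofReal (ℓ / 2) * fgK p q f t s) ≤ 2 * Mb := by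
    rw [lintegral_add_left hΨm, lintegral_const_mul _ hKm, two_mul]
    gcongr
    · exact (lintegral_mono_set hsub).trans hΨ
    · refine le_trans ?_ hbd
      gcongr
      exact (lintegral_mono_set hsub).trans (hΨ1 t)
  rw [hab] at hle
  have hle2 := hle.trans htot
  rw [mul_add] at hle2
  exact ⟨t', ht', le_self_add.trans hle2, le_add_self.trans hle2⟩

lemma fg_real {E : Type*} [NormedAddCommGroup E] (f : ℝ → E) (p q ℓ M : ℝ) (hp : 0 < p)
    (hq : 0 < q) (hℓ : 0 < ℓ) (hM : 0 ≤ M) (t t' : ℝ) (htt : |t - t'| ≤ ℓ)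
    (h : ENNReal.ofReal (ℓ / 2) * (ENNReal.ofReal (ℓ / 2) * fgK p q f t t')
      ≤ 2 * ENNReal.ofReal M) :
    ‖f t - f t'‖ ≤ (8 * M) ^ (1 / p) * ℓ ^ ((q - 2) / p) := by
  have h1 := fgK_bound p q hp hq f t t' ℓ htt
  have h2 : ENNReal.ofReal ((ℓ / 2) * (ℓ / 2) * ‖f t - f t'‖ ^ p) ≤
      ENNReal.ofReal (ℓ ^ q * (2 * M)) := by
    rw [ENNReal.ofReal_mul (by positivity), ENNReal.ofReal_mul (by positivity),
      ENNReal.ofReal_mul (by positivity), ENNReal.ofReal_mul (by positivity),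
      ← ENNReal.ofReal_rpow_of_nonneg (norm_nonneg _) hp.le, ofReal_norm]
    calc _ ≤ ENNReal.ofReal (ℓ / 2) * ENNReal.ofReal (ℓ / 2) *
          (ENNReal.ofReal (ℓ ^ q) * fgK p q f t t') := by gcongr
      _ = ENNReal.ofReal (ℓ ^ q) *
          (ENNReal.ofReal (ℓ / 2) * (ENNReal.ofReal (ℓ / 2) * fgK p q f t t')) := by ring
      _ ≤ ENNReal.ofReal (ℓ ^ q) * (2 * ENNReal.ofReal M) := by gcongr
      _ = _ := by simp
  rw [ENNReal.ofReal_le_ofReal_iff (by positivity)] at h2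
  have h3 : ℓ ^ q = ℓ ^ (q - 2) * (ℓ * ℓ) := by
    rw [Real.rpow_sub hℓ, Real.rpow_two]; field_simp
  have h4 : ‖f t - f t'‖ ^ p ≤ 8 * M * ℓ ^ (q - 2) := by
    rw [h3] at h2
    have : (ℓ * ℓ) * ‖f t - f t'‖ ^ p ≤ (ℓ * ℓ) * (8 * M * ℓ ^ (q - 2)) := by linarith
    exact le_of_mul_le_mul_left this (by positivity)
  have h5 : ‖f t - f t'‖ ≤ (8 * M * ℓ ^ (q - 2)) ^ (1 / p) := by
    rw [one_div, Real.le_rpow_inv_iff_of_pos (norm_nonneg _) (by positivity) hp]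
    exact h4
  rw [Real.mul_rpow (by positivity) (by positivity), ← Real.rpow_mul hℓ.le] at h5
  convert h5 using 3
  ring

lemma fg_chain {E : Type*} [NormedAddCommGroup E] (f : ℝ → E) (hf : Continuous f)
    (p q T M : ℝ) (hp : 0 < p) (hq : 2 < q) (hM : 0 ≤ M)
    (hbd : (∫⁻ t in Set.Ioc 0 T, ‖f t‖ₑ ^ p) +
      (∫⁻ t in Set.Ioc 0 T, ∫⁻ s in Set.Ioc 0 T, fgK p q f t s) ≤ ENNReal.ofReal M)
    (a h : ℝ) (hh : 0 < h) (ha : 0 ≤ a) (hahT : a + h ≤ T) :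
    ∃ t0, ‖f t0‖ ≤ (2 * M / h) ^ (1 / p) ∧ ∀ x ∈ Set.Icc a (a + h),
      ‖f t0 - f x‖ ≤ (8 * M) ^ (1 / p) * h ^ ((q - 2) / p) / (1 - (1 / 2) ^ ((q - 2) / p)) := by
  -- strong measurability of a continuous function on `ℝ`
  have hfs : StronglyMeasurable f := hf.stronglyMeasurable
  set Ψ : ℝ → ℝ≥0∞ := fun t => ‖f t‖ₑ ^ p + (∫⁻ s in Set.Ioc 0 T, fgK p q f t s) with hΨ
  have hm : Measurable (fun t => ∫⁻ s in Set.Ioc 0 T, fgK p q f t s) :=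
    (fgK_measurable p q f hfs).lintegral_prod_right'
  have hΨm : Measurable Ψ := (hfs.enorm.pow_const p).add hm
  have hΨi : ∫⁻ t in Set.Ioc 0 T, Ψ t ≤ ENNReal.ofReal M := by
    rw [hΨ, lintegral_add_right _ hm]
    exact hbd
  have hγ : 0 < (q - 2) / p := div_pos (by linarith) hp
  obtain ⟨t0, ht0, hle0⟩ := fg_exists_point a (a + h) (by linarith) Ψ hΨm
  have hle0 : ENNReal.ofReal h * Ψ t0 ≤ ENNReal.ofReal M := by
    have e : a + h - a = h := by ring
    rw [e] at hle0
    exact hle0.trans ((lintegral_mono_set (Set.Ioc_subset_Ioc ha hahT)).trans hΨi)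
  have hle1 : ENNReal.ofReal h * Ψ t0 ≤ 2 * ENNReal.ofReal M :=
    hle0.trans (by rw [two_mul]; exact le_self_add)
  refine ⟨t0, ?_, ?_⟩
  · have e1 : ENNReal.ofReal (h * ‖f t0‖ ^ p) ≤ ENNReal.ofReal (2 * M) := by
      rw [ENNReal.ofReal_mul hh.le, ← ENNReal.ofReal_rpow_of_nonneg (norm_nonneg _) hp.le,
        ofReal_norm, ENNReal.ofReal_mul (by norm_num), ENNReal.ofReal_ofNat]
      refine le_trans ?_ hle1
      gcongr
      simp [hΨ]
    rw [ENNReal.ofReal_le_ofReal_iff (by positivity)] at e1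
    rw [one_div, Real.le_rpow_inv_iff_of_pos (norm_nonneg _) (by positivity) hp,
      le_div_iff₀ hh, mul_comm]
    exact e1
  · intro x hx
    have hx1 := hx.1
    have hx2 := hx.2
    obtain ⟨u, hu0, hu⟩ := fg_seq
      (fun j t => t ∈ Set.Icc (x - (1 / 2) ^ j * (x - a)) (x + (1 / 2) ^ j * (a + h - x)) ∧
        ENNReal.ofReal (h * (1 / 2) ^ j) * Ψ t ≤ 2 * ENNReal.ofReal M)
      (fun j t t' => ENNReal.ofReal (h * (1 / 2) ^ j / 2) *
        (ENNReal.ofReal (h * (1 / 2) ^ j / 2) * fgK p q f t t') ≤ 2 * ENNReal.ofReal M) t0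
      (by
        refine ⟨⟨?_, ?_⟩, ?_⟩
        · simpa using ht0.1.le
        · simpa using ht0.2
        · simpa using hle1)
      (by
        rintro j t ⟨-, ht⟩
        have hr0 : (0 : ℝ) < (1 / 2) ^ (j + 1) := by positivity
        have hr1 : ((1 : ℝ) / 2) ^ (j + 1) ≤ 1 := pow_le_one₀ (by norm_num) (by norm_num)
        have hr2 : ((1 : ℝ) / 2) ^ (j + 1) = (1 / 2) ^ j / 2 := by rw [pow_succ]; ring
        obtain ⟨t', ht', h1, h2⟩ := fg_step f hfs p q T (ENNReal.ofReal M) Ψ hΨm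
          (fun t => by simp [hΨ]) hΨi (x - (1 / 2) ^ (j + 1) * (x - a))
          (x + (1 / 2) ^ (j + 1) * (a + h - x)) (h * (1 / 2) ^ j) (by rw [hr2]; ring)
          (by positivity)
          (by
            apply Set.Ioc_subset_Ioc
            · nlinarith
            · nlinarith) t ht
        refine ⟨t', ⟨⟨ht'.1.le, ht'.2⟩, ?_⟩, h2⟩
        rw [hr2, ← mul_div_assoc]
        exact h1)
    have hpow : Filter.Tendsto (fun j : ℕ => ((1 : ℝ) / 2) ^ j) Filter.atTop (nhds 0) :=
      tendsto_pow_atTop_nhds_zero_of_lt_one (by norm_num) (by norm_num)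
    have hlim : Filter.Tendsto u Filter.atTop (nhds x) := by
      refine tendsto_of_tendsto_of_tendsto_of_le_of_le (g := fun j : ℕ => x - (1 / 2) ^ j * (x - a))
        (h := fun j : ℕ => x + (1 / 2) ^ j * (a + h - x)) ?_ ?_
        (fun j => (hu j).1.1.1) (fun j => (hu j).1.1.2)
      · simpa using (tendsto_const_nhds (x := x)).sub (hpow.mul_const (x - a))
      · simpa using (tendsto_const_nhds (x := x)).add (hpow.mul_const (a + h - x))
    have hfl : Filter.Tendsto (fun j => f (u j)) Filter.atTop (nhds (f x)) :=
      (hf.tendsto x).comp hlim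
    have hfin := dist_le_of_le_geometric_of_tendsto₀ (((1 : ℝ) / 2) ^ ((q - 2) / p))
      ((8 * M) ^ (1 / p) * h ^ ((q - 2) / p)) (f := fun j => f (u j))
      (Real.rpow_lt_one (by norm_num) (by norm_num) hγ) (by
        intro j
        rw [dist_eq_norm]
        have hr0 : (0 : ℝ) < (1 / 2) ^ j := by positivity
        have hr2 : ((1 : ℝ) / 2) ^ (j + 1) = (1 / 2) ^ j / 2 := by rw [pow_succ]; ring
        have hd : |u j - u (j + 1)| ≤ h * (1 / 2) ^ j := by
          have k1 := (hu j).1.1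
          have k2 := (hu (j + 1)).1.1
          rw [hr2] at k2
          have k3 := k1.1
          have k4 := k1.2
          have k5 := k2.1
          have k6 := k2.2
          rw [abs_le]; constructor <;> nlinarith
        have := fg_real f p q (h * (1 / 2) ^ j) M hp (by linarith) (by positivity) hM _ _ hd (hu j).2
        refine this.trans (le_of_eq ?_)
        rw [Real.mul_rpow hh.le hr0.le, ← Real.rpow_natCast, ← Real.rpow_natCast,
          ← Real.rpow_mul (by norm_num), ← Real.rpow_mul (by norm_num)]
        ring_nf) hfl
    rw [dist_eq_norm, hu0] at hfin
    exact hfin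

lemma fg_partB {B₀ B : Type*}
    [NormedAddCommGroup B₀] [NormedSpace ℝ B₀]
    [NormedAddCommGroup B] [NormedSpace ℝ B]
    (ι₀ : B₀ →L[ℝ] B) (hc : IsCompactOperator ι₀)
    (T p q : ℝ) (hT : 0 < T) (hp : 0 < p) (hq : 2 < q)
    (f : ℕ → ℝ → B₀) (Mb : ℝ≥0∞) (hM : Mb ≠ ⊤) (hf : ∀ n, Continuous (f n))
    (hbd : ∀ n, (∫⁻ t in Set.Ioc 0 T, ‖f n t‖ₑ ^ p) +
      (∫⁻ t in Set.Ioc 0 T, ∫⁻ s in Set.Ioc 0 T, fgK p q (f n) t s) ≤ Mb) :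
    ∃ φ : ℕ → ℕ, StrictMono φ ∧ ∃ g : ℝ → B, ContinuousOn g (Set.Icc 0 T) ∧
        TendstoUniformlyOn (fun n t => ι₀ (f (φ n) t)) g Filter.atTop (Set.Icc 0 T) := by
  set M := Mb.toReal with hMdef
  have hM0 : 0 ≤ M := ENNReal.toReal_nonneg
  have hMb : Mb = ENNReal.ofReal M := (ENNReal.ofReal_toReal hM).symm
  rw [hMb] at hbd
  set γ := (q - 2) / p with hγdef
  have hγ : 0 < γ := div_pos (by linarith) hp
  set C : ℝ := (8 * M) ^ (1 / p) / (1 - (1 / 2) ^ γ) with hCdef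
  have hchain : ∀ n a h, 0 < h → 0 ≤ a → a + h ≤ T →
      ∃ t0, ‖f n t0‖ ≤ (2 * M / h) ^ (1 / p) ∧ ∀ x ∈ Set.Icc a (a + h),
        ‖f n t0 - f n x‖ ≤ C * h ^ γ := by
    intro n a h hh ha hahT
    obtain ⟨t0, h1, h2⟩ := fg_chain (f n) (hf n) p q T M hp hq hM0 (hbd n) a h hh ha hahT
    refine ⟨t0, h1, fun x hx => (h2 x hx).trans (le_of_eq ?_)⟩
    rw [hCdef]; ring
  have hhol0 : ∀ n, ∀ x ∈ Set.Icc 0 T, ∀ y ∈ Set.Icc 0 T, x < y →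
      ‖f n x - f n y‖ ≤ 2 * C * |x - y| ^ γ := by
    intro n x hx y hy hxy
    obtain ⟨t0, -, h2⟩ := hchain n x (y - x) (by linarith) hx.1 (by linarith [hy.2])
    have e1 := h2 x ⟨le_rfl, by linarith⟩
    have e2 := h2 y ⟨hxy.le, by linarith⟩
    have e3 : |x - y| = y - x := by rw [abs_sub_comm, abs_of_pos (by linarith)]
    rw [e3]
    have e4 : f n x - f n y = (f n t0 - f n y) - (f n t0 - f n x) := by abel
    rw [e4]
    refine (norm_sub_le _ _).trans ?_
    linarith
  have hhol : ∀ n, ∀ x ∈ Set.Icc 0 T, ∀ y ∈ Set.Icc 0 T,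
      ‖f n x - f n y‖ ≤ 2 * C * |x - y| ^ γ := by
    intro n x hx y hy
    rcases lt_trichotomy x y with h | h | h
    · exact hhol0 n x hx y hy h
    · subst h; simp [hγ.ne']
    · rw [norm_sub_rev, abs_sub_comm]; exact hhol0 n y hy x hx h
  set R : ℝ := (2 * M / T) ^ (1 / p) + C * T ^ γ with hR
  have hbound : ∀ n, ∀ x ∈ Set.Icc 0 T, ‖f n x‖ ≤ R := by
    intro n x hx
    obtain ⟨t0, h1, h2⟩ := hchain n 0 T hT le_rfl (by linarith)
    have e1 := h2 x (by simpa using hx)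
    have e4 : f n x = f n t0 - (f n t0 - f n x) := by abel
    rw [e4]
    exact (norm_sub_le _ _).trans (add_le_add h1 e1)
  have hK : IsCompact (closure (ι₀ '' Metric.closedBall 0 R)) :=
    IsCompactOperator.isCompact_closure_image_closedBall (f := ι₀.toLinearMap) hc _
  let F : ℕ → BoundedContinuousFunction (Set.Icc (0 : ℝ) T) B := fun n =>
    BoundedContinuousFunction.mkOfCompact
      ⟨fun x => ι₀ (f n x), (ι₀.continuous.comp (hf n)).comp continuous_subtype_val⟩
  have hF : ∀ n x, F n x = ι₀ (f n x) := fun n x => rfl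
  have hcpt : IsCompact (closure (Set.range F)) := by
    refine BoundedContinuousFunction.arzela_ascoli _ hK _ ?_ ?_
    · rintro _ x ⟨n, rfl⟩
      exact subset_closure ⟨f n x, by simpa using hbound n x x.2, rfl⟩
    · refine Metric.equicontinuous_of_continuity_modulus (fun d => ‖ι₀‖ * (2 * C * |d| ^ γ)) ?_ _ ?_
      · have hcont : Continuous (fun d : ℝ => ‖ι₀‖ * (2 * C * |d| ^ γ)) :=
          continuous_const.mul (continuous_const.mul
            (continuous_abs.rpow_const fun _ => Or.inr hγ.le))
        simpa [hγ.ne'] using hcont.tendsto 0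
      · rintro x y ⟨_, n, rfl⟩
        change dist (ι₀ (f n x)) (ι₀ (f n y)) ≤ _
        rw [dist_eq_norm, ← map_sub]
        refine (ι₀.le_opNorm _).trans ?_
        gcongr
        rw [Subtype.dist_eq, Real.dist_eq, abs_abs]
        exact hhol n x x.2 y y.2
  obtain ⟨G, -, φ, hφ, hG⟩ := hcpt.tendsto_subseq (x := F) (fun n => subset_closure ⟨n, rfl⟩)
  refine ⟨φ, hφ, Set.IccExtend hT.le G, ?_, ?_⟩
  · exact (G.continuous.Icc_extend').continuousOn
  · have h1 := BoundedContinuousFunction.tendsto_iff_tendstoUniformly.1 hG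
    rw [tendstoUniformlyOn_iff_tendstoUniformly_comp_coe]
    convert h1 using 1
    · rfl
    · funext x
      simp

theorem flandoli_gatarek_compactness
    {B₀ B B₁ : Type*}
    [NormedAddCommGroup B₀] [NormedSpace ℝ B₀]
    [NormedAddCommGroup B] [NormedSpace ℝ B]
    [NormedAddCommGroup B₁] [NormedSpace ℝ B₁]
    (ι₀ : B₀ →L[ℝ] B) (hι₀inj : Function.Injective ι₀) (hι₀cpt : IsCompactOperator ι₀)
    (ι₁ : B →L[ℝ] B₁) (hι₁inj : Function.Injective ι₁)
    (T : ℝ) (hT : 0 < T) (p α : ℝ) (hp : 1 < p) (hα0 : 0 < α) (hα1 : α < 1) :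
    -- (a) L^p(0,T;B₀) ∩ W^{α,p}(0,T;B₁) ↪ L^p(0,T;B) compactly
    (∀ (f : ℕ → ℝ → B₀) (Mb : ℝ≥0∞), Mb ≠ ⊤ →
      (∀ n, AEStronglyMeasurable (f n) (volume.restrict (Set.Ioc 0 T))) →
      (∀ n, (∫⁻ t in Set.Ioc 0 T, (‖f n t‖₊ : ℝ≥0∞) ^ p) ≤ Mb) →
      (∀ n, (∫⁻ t in Set.Ioc 0 T, (‖ι₁ (ι₀ (f n t))‖₊ : ℝ≥0∞) ^ p)
          + (∫⁻ t in Set.Ioc 0 T, ∫⁻ s in Set.Ioc 0 T,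
              (‖ι₁ (ι₀ (f n t)) - ι₁ (ι₀ (f n s))‖₊ : ℝ≥0∞) ^ p
                / ENNReal.ofReal (|t - s| ^ (1 + α * p))) ≤ Mb) →
      ∃ φ : ℕ → ℕ, StrictMono φ ∧ ∃ g : ℝ → B,
        AEStronglyMeasurable g (volume.restrict (Set.Ioc 0 T)) ∧
        Filter.Tendsto
          (fun n => ∫⁻ t in Set.Ioc 0 T, (‖ι₀ (f (φ n) t) - g t‖₊ : ℝ≥0∞) ^ p)
          Filter.atTop (nhds 0)) ∧
    -- (b) W^{α,p}(0,T;B₀) ↪ C⁰([0,T];B) compactly, when αp > 1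
    (α * p > 1 →
      ∀ (f : ℕ → ℝ → B₀) (Mb : ℝ≥0∞), Mb ≠ ⊤ →
      (∀ n, ContinuousOn (f n) (Set.Icc 0 T)) →
      (∀ n, (∫⁻ t in Set.Ioc 0 T, (‖f n t‖₊ : ℝ≥0∞) ^ p)
          + (∫⁻ t in Set.Ioc 0 T, ∫⁻ s in Set.Ioc 0 T,
              (‖f n t - f n s‖₊ : ℝ≥0∞) ^ p
                / ENNReal.ofReal (|t - s| ^ (1 + α * p))) ≤ Mb) →
      ∃ φ : ℕ → ℕ, StrictMono φ ∧ ∃ g : ℝ → B, ContinuousOn g (Set.Icc 0 T) ∧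
        TendstoUniformlyOn (fun n t => ι₀ (f (φ n) t)) g Filter.atTop (Set.Icc 0 T)) := by
  refine ⟨?_, ?_⟩
  · intro f Mb hM hf h1 h2
    set μ := volume.restrict (Set.Ioc 0 T) with hμ
    let f' : ℕ → ℝ → B₀ := fun n => (hf n).mk
    have hf' : ∀ n, StronglyMeasurable (f' n) := fun n => (hf n).stronglyMeasurable_mk
    have hae : ∀ n, f n =ᵐ[μ] f' n := fun n => (hf n).ae_eq_mk
    have h1' : ∀ n, ∫⁻ t in Set.Ioc 0 T, ‖f' n t‖ₑ ^ p ≤ Mb := by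
      intro n
      refine le_trans (le_of_eq ?_) (h1 n)
      apply lintegral_congr_ae
      filter_upwards [hae n] with t ht
      rw [ht]; rfl
    have h2' : ∀ n, ∫⁻ t in Set.Ioc 0 T, ∫⁻ s in Set.Ioc 0 T,
        fgK p (1 + α * p) (fun t => ι₁ (ι₀ (f' n t))) t s ≤ Mb := by
      intro n
      refine le_trans (le_of_eq ?_) (le_add_self.trans (h2 n))
      apply lintegral_congr_ae
      filter_upwards [hae n] with t ht
      apply lintegral_congr_ae
      filter_upwards [hae n] with s hs
      rw [ht, hs]; rfl
    obtain ⟨φ, hφ, g, hg, hlim⟩ := fg_partA' ι₀ hι₀cpt ι₁ hι₁inj T p α hT hp hα0 f' Mb hM hf'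
      h1' h2'
    refine ⟨φ, hφ, g, hg, hlim.congr fun n => ?_⟩
    apply lintegral_congr_ae
    filter_upwards [hae (φ n)] with t ht
    rw [ht]; rfl
  · intro hαp f Mb hM hf hbd
    let f' : ℕ → ℝ → B₀ := fun n => Set.IccExtend hT.le ((Set.Icc 0 T).restrict (f n))
    have hf' : ∀ n, Continuous (f' n) := fun n => (hf n).restrict.Icc_extend'
    have heq : ∀ n, ∀ x ∈ Set.Icc 0 T, f' n x = f n x := by
      intro n x hx
      simp only [f']
      rw [Set.IccExtend_of_mem _ _ hx]; rfl
    have hae : ∀ n, ∀ᵐ t ∂(volume.restrict (Set.Ioc 0 T)), f' n t = f n t := by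
      intro n
      filter_upwards [ae_restrict_mem measurableSet_Ioc] with t ht
      exact heq n t ⟨ht.1.le, ht.2⟩
    obtain ⟨φ, hφ, g, hg, hlim⟩ := fg_partB ι₀ hι₀cpt T p (1 + α * p) hT (by linarith)
      (by linarith) f' Mb hM hf' (by
        intro n
        refine le_trans (le_of_eq ?_) (hbd n)
        congr 1
        · apply lintegral_congr_ae
          filter_upwards [hae n] with t ht
          rw [ht]; rfl
        · apply lintegral_congr_ae
          filter_upwards [hae n] with t ht
          apply lintegral_congr_ae
          filter_upwards [hae n] with s hs
          unfold fgK
          rw [ht, hs]; rfl)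
    refine ⟨φ, hφ, g, hg, hlim.congr (Filter.Eventually.of_forall fun n x hx => ?_)⟩
    simp only [heq _ x hx]

end
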